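/- Let 0 < q < 1 and set U := φ^2(-q)/φ^2(-q^5). Then q f^6(-q) f^6(-q^10) / (f^6(-q^2) f^6(-q^5)) = U(U-1)/(U-5). -/

import Mathlib

open Real

/-- Ramanujan's theta function `φ(q) = ∑_{n=-∞}^∞ q^(n^2)`. -/
noncomputable def phi (q : ℝ) : ℝ := ∑' n : ℤ, q ^ (n ^ 2)

/-- Ramanujan's theta function `ψ(q) = ∑_{n=0}^∞ q^(n(n+1)/2)`. -/
noncomputable def psi (q : ℝ) : ℝ := ∑' n : ℕ, q ^ (n * (n + 1) / 2)

/-- `fneg q` is Ramanujan's `f(-q) = ∑_{n=-∞}^∞ (-1)^n q^(n(3n-1)/2)`. -/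
noncomputable def fneg (q : ℝ) : ℝ := ∑' n : ℤ, (-1 : ℝ) ^ n * q ^ (n * (3 * n - 1) / 2)

/-!
In Ramanujan's notation `f(a, b) = ∑ₙ a ^ (n (n + 1) / 2) * b ^ (n (n - 1) / 2)` one has
`φ(q) = f(q, q)` and `f(-q) = f(-q, -q ^ 2)`, and by the Jacobi triple product `f(a, b)` is an
infinite product; the finite form of that product is the `q`-binomial theorem, which passes to the
limit by dominated convergence. If `a * b = c * d`, the double series for `f(a, b) * f(c, d)`,
split over the cosets of the index-five sublattice spanned by `(1, 2)` and `(2, -1)`, becomes a sum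
of five products of theta functions. For `φ(-q) ^ 2`, and for `f(1, q) ^ 2 = 4 * ψ(q) ^ 2`, four of
the five agree, which leaves two identities between the values of Euler's function at `q`, `q ^ 2`,
`q ^ 5` and `q ^ 10`. They express `U - 1` and `U - 5` as products, and the theorem follows.
-/

open Filter Topology

section FinitePochhammer

/-- The finite `q`-Pochhammer symbol `(a; q)_n`. -/
def qPochhammer {R : Type*} [CommRing R] (a q : R) (n : ℕ) : R :=
  ∏ k ∈ Finset.range n, (1 - a * q ^ k)

variable {𝕜 : Type*} [Field 𝕜] {q : 𝕜}

/-- The reciprocal `1 / (q; q)_m` as a function of an integer `m`, with the usual convention that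
it vanishes for `m < 0`. -/
def invQPochhammer (q : 𝕜) (m : ℤ) : 𝕜 :=
  if m < 0 then 0 else (qPochhammer q q m.toNat)⁻¹

/-- The Gaussian binomial coefficient `[M choose j]_q` as a quotient of `q`-Pochhammer symbols; it
vanishes unless `0 ≤ j ≤ M`. -/
def gaussBinom (q : 𝕜) (M : ℕ) (j : ℤ) : 𝕜 :=
  qPochhammer q q M * invQPochhammer q j * invQPochhammer q (M - j)

lemma qPochhammer_succ {R : Type*} [CommRing R] (a q : R) (n : ℕ) :
    qPochhammer a q (n + 1) = qPochhammer a q n * (1 - a * q ^ n) :=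
  Finset.prod_range_succ _ n

lemma qPochhammer_self_ne_zero (hq : ∀ n ≠ 0, q ^ n ≠ 1) (n : ℕ) : qPochhammer q q n ≠ 0 :=
  Finset.prod_ne_zero_iff.2 fun k _ ↦ by
    rw [← pow_succ', sub_ne_zero]
    exact (hq _ k.succ_ne_zero).symm

lemma invQPochhammer_of_neg {m : ℤ} (hm : m < 0) : invQPochhammer q m = 0 :=
  if_pos hm

lemma invQPochhammer_natCast (q : 𝕜) (m : ℕ) : invQPochhammer q m = (qPochhammer q q m)⁻¹ := by
  simp [invQPochhammer]

lemma invQPochhammer_sub_one (hq : ∀ n ≠ 0, q ^ n ≠ 1) (m : ℤ) :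
    invQPochhammer q (m - 1) = (1 - q ^ m) * invQPochhammer q m := by
  obtain hm | rfl | ⟨k, rfl⟩ : m < 0 ∨ m = 0 ∨ ∃ k : ℕ, m = (k + 1 : ℕ) := by
    rcases lt_trichotomy m 0 with h | h | h
    exacts [.inl h, .inr (.inl h), .inr (.inr ⟨(m - 1).toNat, by omega⟩)]
  · rw [invQPochhammer_of_neg (by omega), invQPochhammer_of_neg hm, mul_zero]
  · rw [invQPochhammer_of_neg (by omega), zpow_zero, sub_self, zero_mul]
  · have hk := qPochhammer_self_ne_zero hq (k + 1)
    rw [qPochhammer_succ] at hk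
    rw [Nat.cast_succ, add_sub_cancel_right, ← Nat.cast_succ, invQPochhammer_natCast,
      invQPochhammer_natCast, zpow_natCast, qPochhammer_succ, pow_succ']
    field_simp [left_ne_zero_of_mul hk, right_ne_zero_of_mul hk]

lemma gaussBinom_zero_left (q : 𝕜) (j : ℤ) : gaussBinom q 0 j = if j = 0 then 1 else 0 := by
  rcases lt_trichotomy j 0 with hj | rfl | hj
  · simp [gaussBinom, invQPochhammer_of_neg hj, hj.ne]
  · simp [gaussBinom, invQPochhammer, qPochhammer]
  · simp [gaussBinom, invQPochhammer_of_neg (neg_lt_zero.2 hj), hj.ne']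

lemma gaussBinom_symm (q : 𝕜) (M : ℕ) (j : ℤ) : gaussBinom q M (M - j) = gaussBinom q M j := by
  rw [gaussBinom, gaussBinom, sub_sub_cancel, mul_right_comm]

lemma gaussBinom_succ (hq0 : q ≠ 0) (hq : ∀ n ≠ 0, q ^ n ≠ 1) (M : ℕ) (j : ℤ) :
    gaussBinom q (M + 1) j = gaussBinom q M j + q ^ (M + 1 - j) * gaussBinom q M (j - 1) := by
  have hpow : q ^ (M + 1 - j) * q ^ j = q * q ^ M := by
    rw [← zpow_add₀ hq0, sub_add_cancel, zpow_add_one₀ hq0, zpow_natCast, mul_comm]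
  have hj := invQPochhammer_sub_one hq j
  have hMj := invQPochhammer_sub_one hq (M + 1 - j)
  rw [show (M : ℤ) + 1 - j - 1 = M - j by ring] at hMj
  rw [gaussBinom, gaussBinom, gaussBinom, qPochhammer_succ, hj, hMj, Nat.cast_succ,
    show (M : ℤ) - (j - 1) = M + 1 - j by ring]
  linear_combination
    qPochhammer q q M * invQPochhammer q j * invQPochhammer q (M + 1 - j) * hpow

lemma gaussBinom_succ' (hq0 : q ≠ 0) (hq : ∀ n ≠ 0, q ^ n ≠ 1) (M : ℕ) (j : ℤ) :
    gaussBinom q (M + 1) j = q ^ j * gaussBinom q M j + gaussBinom q M (j - 1) := by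
  rw [← gaussBinom_symm q (M + 1), gaussBinom_succ hq0 hq, ← gaussBinom_symm q M j,
    ← gaussBinom_symm q M (j - 1), Nat.cast_succ, add_comm]
  ring_nf

end FinitePochhammer

section InfinitePochhammer

/-- The infinite `q`-Pochhammer symbol `(a; q)_∞`. -/
noncomputable def qPochhammerInf {𝕜 : Type*} [NormedField 𝕜] (a q : 𝕜) : 𝕜 :=
  ∏' k : ℕ, (1 - a * q ^ k)

/-- Euler's function `(q; q)_∞`. -/
noncomputable def eulerFunction {𝕜 : Type*} [NormedField 𝕜] (q : 𝕜) : 𝕜 := qPochhammerInf q q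

variable {𝕜 : Type*} [NormedField 𝕜] {q : 𝕜}

lemma pow_ne_one_of_norm_lt_one (hq : ‖q‖ < 1) : ∀ n ≠ 0, q ^ n ≠ 1 := by
  intro n hn h
  have hlt := pow_lt_one₀ (norm_nonneg q) hq hn
  rw [← norm_pow, h, norm_one] at hlt
  exact lt_irrefl _ hlt

lemma norm_pow_lt_one (hq : ‖q‖ < 1) {n : ℕ} (hn : n ≠ 0) : ‖q ^ n‖ < 1 :=
  norm_pow q n ▸ pow_lt_one₀ (norm_nonneg q) hq hn

lemma summable_norm_neg_mul_pow (a : 𝕜) (hq : ‖q‖ < 1) :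
    Summable fun k : ℕ ↦ ‖-(a * q ^ k)‖ := by
  simpa only [norm_neg, norm_mul, norm_pow] using
    (summable_geometric_of_lt_one (norm_nonneg q) hq).mul_left ‖a‖

variable [CompleteSpace 𝕜]

lemma hasProd_qPochhammerInf (a : 𝕜) (hq : ‖q‖ < 1) :
    HasProd (fun k : ℕ ↦ 1 - a * q ^ k) (qPochhammerInf a q) := by
  simpa only [qPochhammerInf, sub_eq_add_neg] using
    (multipliable_one_add_of_summable (summable_norm_neg_mul_pow a hq)).hasProd

lemma tendsto_qPochhammer (a : 𝕜) (hq : ‖q‖ < 1) :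
    Tendsto (qPochhammer a q) atTop (𝓝 (qPochhammerInf a q)) :=
  (hasProd_qPochhammerInf a hq).tendsto_prod_nat

lemma eulerFunction_ne_zero (hq : ‖q‖ < 1) : eulerFunction q ≠ 0 := by
  have hfactor (k : ℕ) : 1 + -(q * q ^ k) ≠ 0 := by
    rw [← pow_succ', ← sub_eq_add_neg, sub_ne_zero]
    exact (pow_ne_one_of_norm_lt_one hq _ k.succ_ne_zero).symm
  simpa only [eulerFunction, qPochhammerInf, sub_eq_add_neg] using
    tprod_one_add_ne_zero_of_summable hfactor (summable_norm_neg_mul_pow q hq)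

lemma tendsto_qPochhammer_self (hq : ‖q‖ < 1) :
    Tendsto (qPochhammer q q) atTop (𝓝 (eulerFunction q)) :=
  tendsto_qPochhammer q hq

lemma qPochhammerInf_eq_one_sub_mul (a : 𝕜) (hq : ‖q‖ < 1) :
    qPochhammerInf a q = (1 - a) * qPochhammerInf (a * q) q := by
  have hsplit (n : ℕ) : qPochhammer a q (n + 1) = (1 - a) * qPochhammer (a * q) q n := by
    rw [qPochhammer, Finset.prod_range_succ', pow_zero, mul_one, mul_comm]
    simp only [qPochhammer, pow_succ', mul_assoc]
  refine tendsto_nhds_unique ((tendsto_add_atTop_iff_nat 1).2 (tendsto_qPochhammer a hq)) ?_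
  simpa only [hsplit] using (tendsto_qPochhammer (a * q) hq).const_mul (1 - a)

lemma qPochhammerInf_eq_prod_range (a : 𝕜) (hq : ‖q‖ < 1) {m : ℕ} (hm : m ≠ 0) :
    qPochhammerInf a q = ∏ r ∈ Finset.range m, qPochhammerInf (a * q ^ r) (q ^ m) := by
  have : NeZero m := ⟨hm⟩
  let e : Fin m × ℕ ≃ ℕ := (Equiv.prodComm _ _).trans (Nat.divModEquiv m).symm
  have hclass (r : Fin m) : HasProd (fun k : ℕ ↦ 1 - a * q ^ e (r, k))
      (qPochhammerInf (a * q ^ (r : ℕ)) (q ^ m)) := by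
    convert hasProd_qPochhammerInf (a * q ^ (r : ℕ)) (norm_pow_lt_one hq hm) using 3 with k
    simp only [e, Equiv.trans_apply, Equiv.prodComm_apply, Prod.swap_prod_mk,
      Nat.divModEquiv_symm_apply]
    ring
  rw [Finset.prod_range]
  exact ((e.hasProd_iff.2 (hasProd_qPochhammerInf a hq)).prod_fiberwise hclass).unique
    (hasProd_fintype _)

lemma qPochhammerInf_mul_neg (a : 𝕜) (hq : ‖q‖ < 1) :
    qPochhammerInf a q * qPochhammerInf (-a) q = qPochhammerInf (a ^ 2) (q ^ 2) := by
  refine ((hasProd_qPochhammerInf a hq).mul (hasProd_qPochhammerInf (-a) hq)).unique ?_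
  convert hasProd_qPochhammerInf (a ^ 2) (norm_pow_lt_one hq two_ne_zero) using 2 with k
  ring

lemma tendsto_invQPochhammer (hq : ‖q‖ < 1) :
    Tendsto (invQPochhammer q) atTop (𝓝 (eulerFunction q)⁻¹) := by
  rw [← Nat.map_cast_int_atTop, tendsto_map'_iff]
  simpa only [Function.comp_def, invQPochhammer_natCast] using
    (tendsto_qPochhammer_self hq).inv₀ (eulerFunction_ne_zero hq)

lemma tendsto_gaussBinom_central (hq : ‖q‖ < 1) (n : ℤ) :
    Tendsto (fun N : ℕ ↦ gaussBinom q (N + N) (N + n)) atTop (𝓝 (eulerFunction q)⁻¹) := by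
  have hdouble : Tendsto (fun N : ℕ ↦ N + N) atTop atTop := tendsto_id.atTop_add_atTop tendsto_id
  have hplus : Tendsto (fun N : ℕ ↦ (N : ℤ) + n) atTop atTop :=
    tendsto_atTop_add_const_right _ n tendsto_natCast_atTop_atTop
  have hminus : Tendsto (fun N : ℕ ↦ ((N + N : ℕ) : ℤ) - (N + n)) atTop atTop := by
    simpa [sub_eq_add_neg, add_assoc] using
      tendsto_atTop_add_const_right _ (-n) (tendsto_natCast_atTop_atTop (R := ℤ))
  have hlim := (((tendsto_qPochhammer_self hq).comp hdouble).mul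
    ((tendsto_invQPochhammer hq).comp hplus)).mul ((tendsto_invQPochhammer hq).comp hminus)
  rwa [mul_inv_cancel₀ (eulerFunction_ne_zero hq), one_mul] at hlim

lemma exists_norm_gaussBinom_le (hq : ‖q‖ < 1) : ∃ C, ∀ M j, ‖gaussBinom q M j‖ ≤ C := by
  obtain ⟨A, hA⟩ :=
    (Metric.isBounded_range_of_tendsto _ (tendsto_qPochhammer_self hq)).exists_norm_le
  obtain ⟨B, hB⟩ := (Metric.isBounded_range_of_tendsto _
    ((tendsto_invQPochhammer hq).comp tendsto_natCast_atTop_atTop)).exists_norm_le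
  have hA0 : 0 ≤ A := (norm_nonneg _).trans (hA _ ⟨0, rfl⟩)
  have hB0 : 0 ≤ B := (norm_nonneg _).trans (hB _ ⟨0, rfl⟩)
  have hinv (m : ℤ) : ‖invQPochhammer q m‖ ≤ B := by
    rcases lt_or_ge m 0 with hm | hm
    · rwa [invQPochhammer_of_neg hm, norm_zero]
    · exact hB _ ⟨m.toNat, congrArg (invQPochhammer q) (Int.toNat_of_nonneg hm)⟩
  refine ⟨A * B * B, fun M j ↦ ?_⟩
  rw [gaussBinom, norm_mul, norm_mul]
  gcongr
  exacts [hA _ ⟨M, rfl⟩, hinv j, hinv _]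

end InfinitePochhammer

section ThetaTerm

lemma triangle_add (m n : ℤ) :
    (m + n) * (m + n + 1) / 2 = m * (m + 1) / 2 + n * (n + 1) / 2 + m * n := by
  have hdouble (k : ℤ) : 2 * (k * (k + 1) / 2) = k * (k + 1) :=
    Int.two_mul_ediv_two_of_even (Int.even_mul_succ_self k)
  linarith [hdouble (m + n), hdouble m, hdouble n]

variable {𝕜 : Type*} [Field 𝕜] {a b : 𝕜}

/-- The `n`-th term `a ^ (n (n + 1) / 2) * b ^ (n (n - 1) / 2)` of Ramanujan's theta function
`f(a, b)`. -/
def thetaTerm (a b : 𝕜) (n : ℤ) : 𝕜 := a ^ (n * (n + 1) / 2) * b ^ (n * (n - 1) / 2)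

lemma thetaTerm_zero (a b : 𝕜) : thetaTerm a b 0 = 1 := by simp [thetaTerm]

lemma thetaTerm_one (a b : 𝕜) : thetaTerm a b 1 = a := by simp [thetaTerm]

lemma thetaTerm_neg (a b : 𝕜) (n : ℤ) : thetaTerm a b (-n) = thetaTerm b a n := by
  rw [thetaTerm, thetaTerm, mul_comm]
  congr 2 <;> ring_nf

lemma thetaTerm_neg_one (a b : 𝕜) : thetaTerm a b (-1) = b := by
  rw [thetaTerm_neg, thetaTerm_one]

lemma thetaTerm_ne_zero (ha : a ≠ 0) (hb : b ≠ 0) (n : ℤ) : thetaTerm a b n ≠ 0 :=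
  mul_ne_zero (zpow_ne_zero _ ha) (zpow_ne_zero _ hb)

lemma thetaTerm_mul_thetaTerm (a b c d : 𝕜) (n : ℤ) :
    thetaTerm a b n * thetaTerm c d n = thetaTerm (a * c) (b * d) n := by
  simp only [thetaTerm, mul_zpow, mul_mul_mul_comm]

lemma thetaTerm_add (ha : a ≠ 0) (hb : b ≠ 0) (m n : ℤ) :
    thetaTerm a b (m + n) = thetaTerm a b m * thetaTerm a b n * (a * b) ^ (m * n) := by
  have hsub : (m + n) * (m + n - 1) / 2 = m * (m - 1) / 2 + n * (n - 1) / 2 + m * n := by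
    convert triangle_add (-m) (-n) using 2 <;> ring_nf
  simp only [thetaTerm]
  rw [triangle_add, hsub, zpow_add₀ ha, zpow_add₀ ha, zpow_add₀ hb, zpow_add₀ hb, mul_zpow]
  ring

lemma thetaTerm_self (a : 𝕜) (n : ℤ) : thetaTerm a a n = a ^ n ^ 2 := by
  have hexp : n * (n + 1) / 2 + n * (n - 1) / 2 = n ^ 2 := by
    have hadd := Int.two_mul_ediv_two_of_even (Int.even_mul_succ_self n)
    have hsub := Int.two_mul_ediv_two_of_even (Int.even_mul_pred_self n)
    linarith
  rcases eq_or_ne n 0 with rfl | hn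
  · simp [thetaTerm_zero]
  rw [thetaTerm, ← zpow_add' (.inr (.inl (hexp ▸ pow_ne_zero 2 hn))), hexp]

lemma thetaTerm_self_sq (a : 𝕜) (n : ℤ) : thetaTerm a (a ^ 2) n = a ^ (n * (3 * n - 1) / 2) := by
  have hadd := Int.two_mul_ediv_two_of_even (Int.even_mul_succ_self n)
  have hsub := Int.two_mul_ediv_two_of_even (Int.even_mul_pred_self n)
  have hdouble : 2 * (n * (n + 1) / 2 + 2 * (n * (n - 1) / 2)) = n * (3 * n - 1) := by linarith
  rcases eq_or_ne n 0 with rfl | hn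
  · simp [thetaTerm_zero]
  have hexp0 : n * (n + 1) / 2 + 2 * (n * (n - 1) / 2) ≠ 0 := by
    refine right_ne_zero_of_mul (hdouble ▸ mul_ne_zero hn ?_)
    omega
  rw [thetaTerm, ← zpow_natCast, ← zpow_mul, Nat.cast_ofNat, ← zpow_add' (.inr (.inl hexp0)),
    ← hdouble, Int.mul_ediv_cancel_left _ two_ne_zero]

lemma thetaTerm_inv_right {c : 𝕜} (hc : c ≠ 0) (n : ℤ) : thetaTerm c c⁻¹ n = c ^ n := by
  rw [thetaTerm, inv_zpow', ← zpow_add₀ hc]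
  congr 1
  have hadd := Int.two_mul_ediv_two_of_even (Int.even_mul_succ_self n)
  have hsub := Int.two_mul_ediv_two_of_even (Int.even_mul_pred_self n)
  linarith

lemma thetaTerm_add_left (ha : a ≠ 0) (hb : b ≠ 0) (i n : ℤ) :
    thetaTerm a b (i + n) =
      thetaTerm a b i * thetaTerm (a * (a * b) ^ i) (b * (a * b) ^ (-i)) n := by
  have hpow := thetaTerm_inv_right (zpow_ne_zero i (mul_ne_zero ha hb)) n
  rw [thetaTerm_add ha hb, zpow_neg, ← thetaTerm_mul_thetaTerm, hpow, zpow_mul, mul_assoc]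

lemma zpow_mul_thetaTerm (ha : a ≠ 0) (hb : b ≠ 0) (k n : ℤ) :
    (a * b) ^ (k + 1 - n) * thetaTerm a b n = a * (a * b) ^ k * thetaTerm a b (n - 1) := by
  have hpow : (a * b) ^ (k + 1 - n) * (a * b) ^ (1 * (n - 1)) = (a * b) ^ k := by
    rw [← zpow_add₀ (mul_ne_zero ha hb)]
    congr 1
    ring
  conv_lhs => rw [← add_sub_cancel 1 n, thetaTerm_add ha hb, thetaTerm_one, add_sub_cancel]
  linear_combination a * thetaTerm a b (n - 1) * hpow

lemma zpow_mul_thetaTerm' (ha : a ≠ 0) (hb : b ≠ 0) (k n : ℤ) :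
    (a * b) ^ (k + 1 + n) * thetaTerm a b n = b * (a * b) ^ k * thetaTerm a b (n + 1) := by
  simpa only [sub_neg_eq_add, ← neg_add', thetaTerm_neg, mul_comm b a] using
    zpow_mul_thetaTerm hb ha k (-n)

variable {c d Q : 𝕜}

lemma thetaTerm_quintic (ha : a ≠ 0) (hb : b ≠ 0) (hc : c ≠ 0) (hd : d ≠ 0)
    (hab : a * b = Q) (hcd : c * d = Q) (u v : ℤ) :
    thetaTerm a b (u + 2 * v) * thetaTerm c d (2 * u - v) =
      thetaTerm (a * c ^ 2 * Q) (b * d ^ 2 * Q) u *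
        thetaTerm (a ^ 2 * d * Q) (b ^ 2 * c * Q) v := by
  have hQ : Q ≠ 0 := hab ▸ mul_ne_zero ha hb
  have hdouble {x y : 𝕜} (hx : x ≠ 0) (hy : y ≠ 0) (n : ℤ) :
      thetaTerm x y (2 * n) = thetaTerm x y n ^ 2 * (x * y) ^ n ^ 2 := by
    rw [two_mul, thetaTerm_add hx hy, sq, sq]
  have hcancel : Q ^ (u * (2 * v)) * Q ^ (2 * u * -v) = 1 := by
    rw [← zpow_add₀ hQ, ← zpow_zero Q]
    congr 1
    ring
  rw [thetaTerm_add ha hb, sub_eq_add_neg, thetaTerm_add hc hd, thetaTerm_neg, hdouble ha hb,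
    hdouble hc hd, hcd, hab]
  simp only [← thetaTerm_mul_thetaTerm, thetaTerm_self, pow_two]
  linear_combination (thetaTerm a b u * thetaTerm c d u * thetaTerm c d u * Q ^ (u * u) *
    (thetaTerm a b v * thetaTerm a b v * thetaTerm d c v * Q ^ (v * v))) * hcancel

lemma thetaTerm_quintic_coset (ha : a ≠ 0) (hb : b ≠ 0) (hc : c ≠ 0) (hd : d ≠ 0)
    (hab : a * b = Q) (hcd : c * d = Q) (i j u v : ℤ) :
    thetaTerm a b (i + (u + 2 * v)) * thetaTerm c d (j + (2 * u - v)) =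
      thetaTerm a b i * thetaTerm c d j *
        (thetaTerm (a * c ^ 2 * Q ^ (1 + i + 2 * j)) (b * d ^ 2 * Q ^ (1 - i - 2 * j)) u *
          thetaTerm (a ^ 2 * d * Q ^ (1 + 2 * i - j)) (b ^ 2 * c * Q ^ (1 - 2 * i + j)) v) := by
  have hQ : Q ≠ 0 := hab ▸ mul_ne_zero ha hb
  have hi := zpow_ne_zero i hQ
  have hj := zpow_ne_zero j hQ
  rw [thetaTerm_add_left ha hb, thetaTerm_add_left hc hd, mul_mul_mul_comm, hab, hcd,
    thetaTerm_quintic (Q := Q) (mul_ne_zero ha hi) (mul_ne_zero hb (zpow_ne_zero _ hQ))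
      (mul_ne_zero hc hj) (mul_ne_zero hd (zpow_ne_zero _ hQ))]
  · simp only [zpow_add₀ hQ, zpow_sub₀ hQ, zpow_neg, zpow_one, two_mul]
    congr 3 <;> field_simp
  · rwa [mul_mul_mul_comm, ← zpow_add₀ hQ, add_neg_cancel, zpow_zero, mul_one]
  · rwa [mul_mul_mul_comm, ← zpow_add₀ hQ, add_neg_cancel, zpow_zero, mul_one]

end ThetaTerm

section FiniteTripleProduct

variable {𝕜 : Type*} [Field 𝕜] [TopologicalSpace 𝕜] [IsTopologicalRing 𝕜] {a b : 𝕜}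

lemma hasSum_gaussBinom_mul_thetaTerm_nat (ha : a ≠ 0) (hb : b ≠ 0)
    (hab : ∀ n ≠ 0, (a * b) ^ n ≠ 1) (K : ℕ) :
    HasSum (fun n : ℤ ↦ gaussBinom (a * b) K n * thetaTerm a b n)
      (qPochhammer (-a) (a * b) K) := by
  induction K with
  | zero =>
    convert hasSum_single (0 : ℤ) fun n hn ↦ ?_ using 1 <;>
      simp_all [gaussBinom_zero_left, thetaTerm_zero, qPochhammer]
  | succ K ih =>
    have hrec (n : ℤ) : gaussBinom (a * b) (K + 1) n * thetaTerm a b n =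
        gaussBinom (a * b) K n * thetaTerm a b n +
          a * (a * b) ^ K * (gaussBinom (a * b) K (n - 1) * thetaTerm a b (n - 1)) := by
      have hterm := zpow_mul_thetaTerm ha hb K n
      rw [zpow_natCast] at hterm
      rw [gaussBinom_succ (mul_ne_zero ha hb) hab]
      linear_combination gaussBinom (a * b) K (n - 1) * hterm
    have hprod : qPochhammer (-a) (a * b) (K + 1) =
        qPochhammer (-a) (a * b) K + a * (a * b) ^ K * qPochhammer (-a) (a * b) K := by
      rw [qPochhammer_succ]
      ring
    rw [hprod]
    simp only [hrec]
    exact ih.add (((Equiv.subRight (1 : ℤ)).hasSum_iff.2 ih).mul_left _)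

lemma hasSum_gaussBinom_mul_thetaTerm (ha : a ≠ 0) (hb : b ≠ 0)
    (hab : ∀ n ≠ 0, (a * b) ^ n ≠ 1) (K L : ℕ) :
    HasSum (fun n : ℤ ↦ gaussBinom (a * b) (K + L) (L + n) * thetaTerm a b n)
      (qPochhammer (-a) (a * b) K * qPochhammer (-b) (a * b) L) := by
  induction L with
  | zero => simpa [qPochhammer] using hasSum_gaussBinom_mul_thetaTerm_nat ha hb hab K
  | succ L ih =>
    have hrec (n : ℤ) :
        gaussBinom (a * b) (K + L + 1) ((L + 1 : ℕ) + n) * thetaTerm a b n =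
          b * (a * b) ^ L * (gaussBinom (a * b) (K + L) (L + (n + 1)) * thetaTerm a b (n + 1)) +
            gaussBinom (a * b) (K + L) (L + n) * thetaTerm a b n := by
      have hterm := zpow_mul_thetaTerm' ha hb L n
      rw [zpow_natCast] at hterm
      rw [gaussBinom_succ' (mul_ne_zero ha hb) hab, Nat.cast_succ,
        show (L : ℤ) + 1 + n - 1 = L + n by ring, show (L : ℤ) + (n + 1) = L + 1 + n by ring]
      linear_combination gaussBinom (a * b) (K + L) (L + 1 + n) * hterm
    have hprod : qPochhammer (-a) (a * b) K * qPochhammer (-b) (a * b) (L + 1) =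
        b * (a * b) ^ L * (qPochhammer (-a) (a * b) K * qPochhammer (-b) (a * b) L) +
          qPochhammer (-a) (a * b) K * qPochhammer (-b) (a * b) L := by
      rw [qPochhammer_succ]
      ring
    rw [hprod]
    simp only [← add_assoc K L 1, hrec]
    exact (((Equiv.addRight (1 : ℤ)).hasSum_iff.2 ih).mul_left _).add ih

end FiniteTripleProduct

section Theta

variable {𝕜 : Type*} [NormedField 𝕜] {a b c d Q : 𝕜}

/-- Ramanujan's theta function `f(a, b) = ∑ₙ a ^ (n (n + 1) / 2) * b ^ (n (n - 1) / 2)`, the sum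
extending over all integers `n`. -/
noncomputable def ramanujanTheta (a b : 𝕜) : 𝕜 := ∑' n : ℤ, thetaTerm a b n

lemma ramanujanTheta_comm (a b : 𝕜) : ramanujanTheta a b = ramanujanTheta b a := by
  rw [ramanujanTheta, ← (Equiv.neg ℤ).tsum_eq]
  simp only [Equiv.neg_apply, thetaTerm_neg, ramanujanTheta]

lemma ramanujanTheta_shift (ha : a ≠ 0) (hb : b ≠ 0) (i : ℤ) :
    ramanujanTheta a b =
      thetaTerm a b i * ramanujanTheta (a * (a * b) ^ i) (b * (a * b) ^ (-i)) := by
  rw [ramanujanTheta, ← (Equiv.addLeft i).tsum_eq]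
  simp only [Equiv.coe_addLeft, thetaTerm_add_left ha hb, ramanujanTheta, tsum_mul_left]

lemma summable_norm_thetaTerm (ha : a ≠ 0) (hb : b ≠ 0) (hab : ‖a * b‖ < 1) :
    Summable fun n : ℤ ↦ ‖thetaTerm a b n‖ := by
  have hnat {x y : 𝕜} (hx : x ≠ 0) (hy : y ≠ 0) (hxy : ‖x * y‖ < 1) :
      Summable fun n : ℕ ↦ ‖thetaTerm x y n‖ := by
    have hlim : Tendsto (fun n : ℕ ↦ ‖x‖ * ‖x * y‖ ^ n) atTop (𝓝 0) := by
      simpa only [mul_zero] using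
        (tendsto_pow_atTop_nhds_zero_of_lt_one (norm_nonneg _) hxy).const_mul ‖x‖
    refine summable_of_ratio_test_tendsto_lt_one zero_lt_one
      (.of_forall fun n ↦ norm_ne_zero_iff.2 (thetaTerm_ne_zero hx hy n)) (hlim.congr fun n ↦ ?_)
    have hn := norm_ne_zero_iff.2 (thetaTerm_ne_zero hx hy n)
    rw [norm_norm, norm_norm, eq_div_iff hn, Nat.cast_succ, thetaTerm_add hx hy, thetaTerm_one,
      mul_one, zpow_natCast]
    simp only [norm_mul, norm_pow]
    ring
  refine .of_nat_of_neg (hnat ha hb hab) ?_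
  simpa only [thetaTerm_neg] using hnat hb ha (mul_comm a b ▸ hab)

variable [CompleteSpace 𝕜]

theorem ramanujanTheta_eq_qPochhammerInf (ha : a ≠ 0) (hb : b ≠ 0) (hab : ‖a * b‖ < 1) :
    ramanujanTheta a b = eulerFunction (a * b) * qPochhammerInf (-a) (a * b) *
      qPochhammerInf (-b) (a * b) := by
  obtain ⟨C, hC⟩ := exists_norm_gaussBinom_le hab
  have hfinite (N : ℕ) := (hasSum_gaussBinom_mul_thetaTerm ha hb
    (pow_ne_one_of_norm_lt_one hab) N N).tsum_eq
  have hsum : Tendsto (fun N : ℕ ↦ ∑' n : ℤ, gaussBinom (a * b) (N + N) (N + n) * thetaTerm a b n)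
      atTop (𝓝 ((eulerFunction (a * b))⁻¹ * ramanujanTheta a b)) := by
    rw [ramanujanTheta, ← tsum_mul_left]
    refine tendsto_tsum_of_dominated_convergence
      ((summable_norm_thetaTerm ha hb hab).mul_left C)
      (fun n ↦ (tendsto_gaussBinom_central hab n).mul_const _) (.of_forall fun N n ↦ ?_)
    rw [norm_mul]
    gcongr
    exact hC _ _
  have hprod := (tendsto_qPochhammer (-a) hab).mul (tendsto_qPochhammer (-b) hab)
  simp only [hfinite] at hsum
  rw [mul_assoc, ← tendsto_nhds_unique hsum hprod,
    mul_inv_cancel_left₀ (eulerFunction_ne_zero hab)]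

lemma hasSum_thetaTerm_mul_thetaTerm (ha : a ≠ 0) (hb : b ≠ 0) (hc : c ≠ 0) (hd : d ≠ 0)
    (hab : ‖a * b‖ < 1) (hcd : ‖c * d‖ < 1) :
    HasSum (fun p : ℤ × ℤ ↦ thetaTerm a b p.1 * thetaTerm c d p.2)
      (ramanujanTheta a b * ramanujanTheta c d) :=
  have hsum := summable_norm_thetaTerm ha hb hab
  have hsum' := summable_norm_thetaTerm hc hd hcd
  hsum.of_norm.hasSum.mul hsum'.of_norm.hasSum (summable_mul_of_summable_norm hsum hsum')

/-- The coset representatives, closest to the origin, of the sublattice of `ℤ × ℤ` spanned by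
`(1, 2)` and `(2, -1)`, which has index five. -/
def quinticRep : Fin 5 → ℤ × ℤ := ![(0, 0), (1, 0), (0, 1), (0, -1), (-1, 0)]

lemma bijective_quinticRep_add :
    Function.Bijective fun p : Fin 5 × ℤ × ℤ ↦
      ((quinticRep p.1).1 + (p.2.1 + 2 * p.2.2), (quinticRep p.1).2 + (2 * p.2.1 - p.2.2)) := by
  constructor
  · rintro ⟨r, u, v⟩ ⟨s, x, y⟩ h
    obtain ⟨h₁, h₂⟩ := Prod.ext_iff.1 h
    fin_cases r <;> fin_cases s <;>
      simp only [quinticRep, Fin.zero_eta, Fin.mk_one, Fin.reduceFinMk, Fin.reduceEq,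
        Matrix.cons_val, Prod.mk.injEq, zero_ne_one, one_ne_zero, false_and, true_and]
        at h₁ h₂ ⊢ <;>
      omega
  · rintro ⟨m, n⟩
    obtain ⟨r, hr⟩ : ∃ r, m + 2 * n =
        (quinticRep r).1 + 2 * (quinticRep r).2 + 5 * ((m + 2 * n + 2) / 5) := by
      simp only [Fin.exists_fin_succ, Fin.succ_zero_eq_one, Fin.succ_one_eq_two, Fin.reduceSucc,
        quinticRep, Matrix.cons_val, IsEmpty.exists_iff, or_false]
      omega
    refine ⟨(r, (m + 2 * n + 2) / 5, 2 * ((m + 2 * n + 2) / 5) - (n - (quinticRep r).2)), ?_⟩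
    ext <;> dsimp only <;> linarith

theorem ramanujanTheta_mul_ramanujanTheta (ha : a ≠ 0) (hb : b ≠ 0) (hc : c ≠ 0) (hd : d ≠ 0)
    (hab : a * b = Q) (hcd : c * d = Q) (hQ : ‖Q‖ < 1) :
    ramanujanTheta a b * ramanujanTheta c d = ∑ r,
      let (i, j) := quinticRep r
      thetaTerm a b i * thetaTerm c d j *
        (ramanujanTheta (a * c ^ 2 * Q ^ (1 + i + 2 * j)) (b * d ^ 2 * Q ^ (1 - i - 2 * j)) *
          ramanujanTheta (a ^ 2 * d * Q ^ (1 + 2 * i - j)) (b ^ 2 * c * Q ^ (1 - 2 * i + j))) := by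
  have hQ0 : Q ≠ 0 := hab ▸ mul_ne_zero ha hb
  have hnorm {x y : 𝕜} {k l : ℤ} (hxy : x * y = Q ^ 3) (hkl : k + l = 2) :
      ‖x * Q ^ k * (y * Q ^ l)‖ < 1 := by
    rw [mul_mul_mul_comm, hxy, ← zpow_add₀ hQ0, hkl, zpow_ofNat, ← pow_add]
    exact norm_pow_lt_one hQ (by decide)
  have hprod : a * c ^ 2 * (b * d ^ 2) = Q ^ 3 := by
    linear_combination (c * d) ^ 2 * hab + Q * (c * d + Q) * hcd
  have hprod' : a ^ 2 * d * (b ^ 2 * c) = Q ^ 3 := by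
    linear_combination (a * b) ^ 2 * hcd + Q * (a * b + Q) * hab
  have hlattice := (Equiv.ofBijective _ bijective_quinticRep_add).hasSum_iff.2
    (hasSum_thetaTerm_mul_thetaTerm ha hb hc hd (hab ▸ hQ) (hcd ▸ hQ))
  refine (hlattice.prod_fiberwise fun r ↦ ?_).unique (hasSum_fintype _)
  simp only [Function.comp_def, Equiv.ofBijective_apply,
    thetaTerm_quintic_coset ha hb hc hd hab hcd]
  refine (hasSum_thetaTerm_mul_thetaTerm ?_ ?_ ?_ ?_ (hnorm ?_ ?_) (hnorm ?_ ?_)).mul_left _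
  case refine_5 => exact hprod
  case refine_7 => exact hprod'
  case refine_6 | refine_8 => ring
  all_goals simp [ha, hb, hc, hd, zpow_ne_zero _ hQ0]

end Theta

section Products

variable {𝕜 : Type*} [NormedField 𝕜] [CompleteSpace 𝕜] {q : 𝕜}

lemma eulerFunction_eq_prod_range (hq : ‖q‖ < 1) {m : ℕ} (hm : m ≠ 0) :
    eulerFunction q = ∏ r ∈ Finset.range m, qPochhammerInf (q ^ (r + 1)) (q ^ m) := by
  simpa only [eulerFunction, pow_succ'] using qPochhammerInf_eq_prod_range q hq hm

lemma eulerFunction_mul_qPochhammerInf_neg (hq : ‖q‖ < 1) :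
    eulerFunction q * qPochhammerInf (-q) q = eulerFunction (q ^ 2) :=
  qPochhammerInf_mul_neg q hq

lemma ramanujanTheta_neg_neg_sq (hq0 : q ≠ 0) (hq : ‖q‖ < 1) :
    ramanujanTheta (-q) (-q ^ 2) = eulerFunction q := by
  have hab : -q * -q ^ 2 = q ^ 3 := by ring
  have hnorm := norm_pow_lt_one hq three_ne_zero
  rw [ramanujanTheta_eq_qPochhammerInf (neg_ne_zero.2 hq0) (neg_ne_zero.2 (pow_ne_zero 2 hq0))
    (hab ▸ hnorm), hab, neg_neg, neg_neg, eulerFunction_eq_prod_range hq three_ne_zero]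
  simp only [Finset.prod_range_succ, Finset.prod_range_zero, eulerFunction, one_mul, zero_add,
    pow_one, Nat.reduceAdd]
  ring

lemma ramanujanTheta_neg_neg_mul (hq0 : q ≠ 0) (hq : ‖q‖ < 1) :
    ramanujanTheta (-q) (-q) * eulerFunction (q ^ 2) = eulerFunction q ^ 2 := by
  have hab : -q * -q = q ^ 2 := by ring
  have hnorm := norm_pow_lt_one hq two_ne_zero
  rw [ramanujanTheta_eq_qPochhammerInf (neg_ne_zero.2 hq0) (neg_ne_zero.2 hq0)
    (hab ▸ hnorm), hab, neg_neg, eulerFunction_eq_prod_range hq two_ne_zero]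
  simp only [Finset.prod_range_succ, Finset.prod_range_zero, eulerFunction, one_mul, zero_add,
    pow_one, Nat.reduceAdd]
  ring

lemma ramanujanTheta_one_left_mul (hq0 : q ≠ 0) (hq : ‖q‖ < 1) :
    ramanujanTheta 1 q * eulerFunction q = 2 * eulerFunction (q ^ 2) ^ 2 := by
  rw [ramanujanTheta_eq_qPochhammerInf one_ne_zero hq0 (by rwa [one_mul]), one_mul,
    qPochhammerInf_eq_one_sub_mul _ hq, neg_one_mul, ← eulerFunction_mul_qPochhammerInf_neg hq]
  ring

lemma ramanujanTheta_mod_ten_mul (hq0 : q ≠ 0) (hq : ‖q‖ < 1) :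
    ramanujanTheta (-q) (-q ^ 9) * ramanujanTheta (-q ^ 3) (-q ^ 7) *
        (eulerFunction (q ^ 2) * eulerFunction (q ^ 5)) =
      eulerFunction q * eulerFunction (q ^ 10) ^ 3 := by
  have hpow (n : ℕ) : -q ^ n ≠ 0 := neg_ne_zero.2 (pow_ne_zero n hq0)
  have h₁₉ : -q * -q ^ 9 = q ^ 10 := by ring
  have h₃₇ : -q ^ 3 * -q ^ 7 = q ^ 10 := by ring
  have hnorm := norm_pow_lt_one hq (n := 10) (by decide)
  rw [ramanujanTheta_eq_qPochhammerInf (neg_ne_zero.2 hq0) (hpow 9) (h₁₉ ▸ hnorm),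
    ramanujanTheta_eq_qPochhammerInf (hpow 3) (hpow 7) (h₃₇ ▸ hnorm), h₁₉, h₃₇,
    eulerFunction_eq_prod_range (norm_pow_lt_one hq two_ne_zero) (m := 5) (by decide),
    eulerFunction_eq_prod_range (norm_pow_lt_one hq (n := 5) (by decide)) two_ne_zero,
    eulerFunction_eq_prod_range hq (m := 10) (by decide)]
  simp only [Finset.prod_range_succ, Finset.prod_range_zero, eulerFunction, one_mul, zero_add,
    pow_one, Nat.reduceAdd, neg_neg, ← pow_mul, Nat.reduceMul]
  ring

lemma ramanujanTheta_mod_five_mul (hq0 : q ≠ 0) (hq : ‖q‖ < 1) :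
    ramanujanTheta q (q ^ 4) * ramanujanTheta (q ^ 2) (q ^ 3) *
        (eulerFunction q * eulerFunction (q ^ 10)) =
      eulerFunction (q ^ 2) * eulerFunction (q ^ 5) ^ 3 := by
  have hpow (n : ℕ) : q ^ n ≠ 0 := pow_ne_zero n hq0
  have h₁₄ : q * q ^ 4 = q ^ 5 := by ring
  have h₂₃ : q ^ 2 * q ^ 3 = q ^ 5 := by ring
  have hnorm := norm_pow_lt_one hq (n := 5) (by decide)
  have hten := eulerFunction_mul_qPochhammerInf_neg hnorm
  rw [← pow_mul] at hten
  rw [ramanujanTheta_eq_qPochhammerInf hq0 (hpow 4) (h₁₄ ▸ hnorm),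
    ramanujanTheta_eq_qPochhammerInf (hpow 2) (hpow 3) (h₂₃ ▸ hnorm), h₁₄, h₂₃, ← hten,
    ← eulerFunction_mul_qPochhammerInf_neg hq,
    qPochhammerInf_eq_prod_range (-q) hq (m := 5) (by decide)]
  simp only [Finset.prod_range_succ, Finset.prod_range_zero, one_mul, neg_mul, ← pow_succ',
    zero_add, pow_one, Nat.reduceAdd]
  ring

end Products

section QuinticIdentities

variable {𝕜 : Type*} [NormedField 𝕜] [CompleteSpace 𝕜] {q : 𝕜}

lemma ramanujanTheta_self_sq (hq0 : q ≠ 0) (hq : ‖q‖ < 1) :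
    ramanujanTheta q q ^ 2 = ramanujanTheta (q ^ 5) (q ^ 5) ^ 2 +
      4 * q * (ramanujanTheta q (q ^ 9) * ramanujanTheta (q ^ 3) (q ^ 7)) := by
  have h : ramanujanTheta q q * ramanujanTheta q q =
      ramanujanTheta (q ^ 5) (q ^ 5) * ramanujanTheta (q ^ 5) (q ^ 5) +
        q * (ramanujanTheta (q ^ 7) (q ^ 3) * ramanujanTheta (q ^ 9) q) +
        q * (ramanujanTheta (q ^ 9) q * ramanujanTheta (q ^ 3) (q ^ 7)) +
        q * (ramanujanTheta q (q ^ 9) * ramanujanTheta (q ^ 7) (q ^ 3)) +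
        q * (ramanujanTheta (q ^ 3) (q ^ 7) * ramanujanTheta q (q ^ 9)) := by
    have hdissect := ramanujanTheta_mul_ramanujanTheta hq0 hq0 hq0 hq0 rfl rfl
      (by simpa only [sq] using norm_pow_lt_one hq two_ne_zero)
    simp only [Fin.sum_univ_five, quinticRep, Matrix.cons_val] at hdissect
    simp only [thetaTerm_zero, thetaTerm_one, thetaTerm_neg_one, mul_one, one_mul, add_zero,
      mul_zero, zpow_ofNat, zpow_neg, pow_one, sub_zero, sub_self, pow_zero, mul_neg,
      sub_neg_eq_add, add_neg_cancel, Int.reduceAdd, Int.reduceSub, Int.reduceNeg, mul_inv_rev]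
      at hdissect
    convert hdissect using 6 <;> field_simp
  rw [sq, h, ramanujanTheta_comm (q ^ 7), ramanujanTheta_comm (q ^ 9)]
  ring

lemma ramanujanTheta_one_left_sq (hq0 : q ≠ 0) (hq : ‖q‖ < 1) :
    ramanujanTheta 1 q ^ 2 = q * ramanujanTheta 1 (q ^ 5) ^ 2 +
      4 * (ramanujanTheta q (q ^ 4) * ramanujanTheta (q ^ 2) (q ^ 3)) := by
  have h : ramanujanTheta 1 q * ramanujanTheta 1 q =
      ramanujanTheta q (q ^ 4) * ramanujanTheta (q ^ 2) (q ^ 3) +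
        ramanujanTheta (q ^ 2) (q ^ 3) * ramanujanTheta (q ^ 4) q +
        ramanujanTheta (q ^ 3) (q ^ 2) * ramanujanTheta q (q ^ 4) +
        q * (ramanujanTheta q⁻¹ (q ^ 6) * ramanujanTheta (q ^ 3) (q ^ 2)) +
        q * (ramanujanTheta 1 (q ^ 5) * ramanujanTheta 1 (q ^ 5)) := by
    have hdissect := ramanujanTheta_mul_ramanujanTheta one_ne_zero hq0 one_ne_zero hq0
      (one_mul q) (one_mul q) hq
    simp only [Fin.sum_univ_five, quinticRep, Matrix.cons_val] at hdissect
    simp only [thetaTerm_zero, thetaTerm_one, thetaTerm_neg_one, mul_one, one_mul, add_zero,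
      mul_zero, zpow_ofNat, zpow_neg, pow_one, sub_zero, sub_self, pow_zero, mul_neg,
      sub_neg_eq_add, add_neg_cancel, Int.reduceAdd, Int.reduceSub, Int.reduceNeg, one_pow]
      at hdissect
    convert hdissect using 6 <;> field_simp
  have hshift : q * ramanujanTheta q⁻¹ (q ^ 6) = ramanujanTheta (q ^ 4) q := by
    have hexp : q⁻¹ * (q⁻¹ * q ^ 6) = q ^ 4 := by field_simp
    have hexp' : q ^ 6 * (q⁻¹ * q ^ 6)⁻¹ = q := by field_simp
    rw [ramanujanTheta_shift (inv_ne_zero hq0) (pow_ne_zero 6 hq0) 1, thetaTerm_one, zpow_one,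
      zpow_neg_one, mul_inv_cancel_left₀ hq0, hexp, hexp']
  rw [sq, h, ← mul_assoc q, hshift, ramanujanTheta_comm (q ^ 3), ramanujanTheta_comm (q ^ 4)]
  ring

lemma eulerFunction_quintic_phi (hq0 : q ≠ 0) (hq : ‖q‖ < 1) :
    eulerFunction q ^ 4 * eulerFunction (q ^ 5) * eulerFunction (q ^ 10) ^ 2 =
      eulerFunction (q ^ 2) ^ 2 * eulerFunction (q ^ 5) ^ 5 -
        4 * q * eulerFunction q * eulerFunction (q ^ 2) * eulerFunction (q ^ 10) ^ 5 := by
  have hphi := ramanujanTheta_neg_neg_mul hq0 hq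
  have hphi' := ramanujanTheta_neg_neg_mul (pow_ne_zero 5 hq0) (norm_pow_lt_one hq (by decide))
  have hdissect := ramanujanTheta_self_sq (neg_ne_zero.2 hq0) (by rwa [norm_neg])
  simp only [Odd.neg_pow (n := 3) (by decide), Odd.neg_pow (n := 5) (by decide),
    Odd.neg_pow (n := 7) (by decide), Odd.neg_pow (n := 9) (by decide)] at hdissect
  rw [← pow_mul] at hphi'
  have hmul := ramanujanTheta_mod_ten_mul hq0 hq
  linear_combination
    eulerFunction (q ^ 2) ^ 2 * eulerFunction (q ^ 5) * eulerFunction (q ^ 10) ^ 2 * hdissect -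
      eulerFunction (q ^ 5) * eulerFunction (q ^ 10) ^ 2 *
        (ramanujanTheta (-q) (-q) * eulerFunction (q ^ 2) + eulerFunction q ^ 2) * hphi +
      eulerFunction (q ^ 2) ^ 2 * eulerFunction (q ^ 5) *
        (ramanujanTheta (-q ^ 5) (-q ^ 5) * eulerFunction (q ^ 10) + eulerFunction (q ^ 5) ^ 2) *
        hphi' -
      4 * q * eulerFunction (q ^ 2) * eulerFunction (q ^ 10) ^ 2 * hmul

lemma eulerFunction_quintic_psi (h2 : (2 : 𝕜) ≠ 0) (hq0 : q ≠ 0) (hq : ‖q‖ < 1) :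
    eulerFunction (q ^ 2) ^ 4 * eulerFunction (q ^ 5) ^ 2 * eulerFunction (q ^ 10) =
      q * eulerFunction q ^ 2 * eulerFunction (q ^ 10) ^ 5 +
        eulerFunction q * eulerFunction (q ^ 2) * eulerFunction (q ^ 5) ^ 5 := by
  have hpsi := ramanujanTheta_one_left_mul hq0 hq
  have hpsi' := ramanujanTheta_one_left_mul (pow_ne_zero 5 hq0) (norm_pow_lt_one hq (by decide))
  have hdissect := ramanujanTheta_one_left_sq hq0 hq
  rw [← pow_mul] at hpsi'
  have hmul := ramanujanTheta_mod_five_mul hq0 hq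
  refine mul_left_cancel₀ (pow_ne_zero 2 h2) ?_
  linear_combination
    eulerFunction q ^ 2 * eulerFunction (q ^ 5) ^ 2 * eulerFunction (q ^ 10) * hdissect -
      eulerFunction (q ^ 5) ^ 2 * eulerFunction (q ^ 10) *
        (ramanujanTheta 1 q * eulerFunction q + 2 * eulerFunction (q ^ 2) ^ 2) * hpsi +
      q * eulerFunction q ^ 2 * eulerFunction (q ^ 10) *
        (ramanujanTheta 1 (q ^ 5) * eulerFunction (q ^ 5) + 2 * eulerFunction (q ^ 10) ^ 2) *
        hpsi' +
      4 * eulerFunction q * eulerFunction (q ^ 5) ^ 2 * hmul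

lemma ramanujanTheta_neg_sq_div (hq0 : q ≠ 0) (hq : ‖q‖ < 1) :
    ramanujanTheta (-q) (-q) ^ 2 / ramanujanTheta (-q ^ 5) (-q ^ 5) ^ 2 =
      eulerFunction q ^ 4 * eulerFunction (q ^ 10) ^ 2 /
        (eulerFunction (q ^ 2) ^ 2 * eulerFunction (q ^ 5) ^ 4) := by
  have hE₂ := eulerFunction_ne_zero (norm_pow_lt_one hq two_ne_zero)
  have hE₁₀ := eulerFunction_ne_zero (norm_pow_lt_one hq (n := 10) (by decide))
  have hphi' := ramanujanTheta_neg_neg_mul (pow_ne_zero 5 hq0) (norm_pow_lt_one hq (by decide))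
  rw [← pow_mul] at hphi'
  rw [eq_div_of_mul_eq hE₂ (ramanujanTheta_neg_neg_mul hq0 hq), eq_div_of_mul_eq hE₁₀ hphi']
  field_simp

lemma ramanujanTheta_neg_sq_div_sub_one (hq0 : q ≠ 0) (hq : ‖q‖ < 1) :
    ramanujanTheta (-q) (-q) ^ 2 / ramanujanTheta (-q ^ 5) (-q ^ 5) ^ 2 - 1 =
      -4 * q * eulerFunction q * eulerFunction (q ^ 10) ^ 5 /
        (eulerFunction (q ^ 2) * eulerFunction (q ^ 5) ^ 5) := by
  have hE₂ := eulerFunction_ne_zero (norm_pow_lt_one hq two_ne_zero)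
  have hE₅ := eulerFunction_ne_zero (norm_pow_lt_one hq (n := 5) (by decide))
  rw [ramanujanTheta_neg_sq_div hq0 hq]
  field_simp
  linear_combination eulerFunction_quintic_phi hq0 hq

lemma ramanujanTheta_neg_sq_div_sub_five (h2 : (2 : 𝕜) ≠ 0) (hq0 : q ≠ 0) (hq : ‖q‖ < 1) :
    ramanujanTheta (-q) (-q) ^ 2 / ramanujanTheta (-q ^ 5) (-q ^ 5) ^ 2 - 5 =
      -4 * eulerFunction (q ^ 2) ^ 3 * eulerFunction (q ^ 10) /
        (eulerFunction q * eulerFunction (q ^ 5) ^ 3) := by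
  have hE₁ := eulerFunction_ne_zero hq
  have hE₂ := eulerFunction_ne_zero (norm_pow_lt_one hq two_ne_zero)
  have hE₅ := eulerFunction_ne_zero (norm_pow_lt_one hq (n := 5) (by decide))
  rw [ramanujanTheta_neg_sq_div hq0 hq]
  field_simp
  refine mul_left_cancel₀ hE₅ ?_
  linear_combination eulerFunction q * eulerFunction_quintic_phi hq0 hq +
    4 * eulerFunction (q ^ 2) * eulerFunction_quintic_psi h2 hq0 hq

end QuinticIdentities

theorem stmt_3_general {𝕜 : Type*} [NormedField 𝕜] [CompleteSpace 𝕜] (h2 : (2 : 𝕜) ≠ 0)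
    (q U : 𝕜) (hq : ‖q‖ < 1)
    (hU : U = ramanujanTheta (-q) (-q) ^ 2 / ramanujanTheta (-q ^ 5) (-q ^ 5) ^ 2) :
    q * ramanujanTheta (-q) (-q ^ 2) ^ 6 * ramanujanTheta (-q ^ 10) (-(q ^ 10) ^ 2) ^ 6 /
        (ramanujanTheta (-q ^ 2) (-(q ^ 2) ^ 2) ^ 6 *
          ramanujanTheta (-q ^ 5) (-(q ^ 5) ^ 2) ^ 6) =
      U * (U - 1) / (U - 5) := by
  rcases eq_or_ne q 0 with rfl | hq0
  · rcases eq_or_ne (ramanujanTheta (0 : 𝕜) 0) 0 with h | h <;> simp [hU, h]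
  have hnorm (n : ℕ) (hn : n ≠ 0 := by decide) : ‖q ^ n‖ < 1 := norm_pow_lt_one hq hn
  have hpow (n : ℕ) : q ^ n ≠ 0 := pow_ne_zero n hq0
  have hE₁ := eulerFunction_ne_zero hq
  have hE₂ := eulerFunction_ne_zero (hnorm 2)
  have hE₅ := eulerFunction_ne_zero (hnorm 5)
  have hE₁₀ := eulerFunction_ne_zero (hnorm 10)
  have h4 : (4 : 𝕜) ≠ 0 := by
    convert pow_ne_zero 2 h2 using 1
    norm_num
  rw [hU, ramanujanTheta_neg_sq_div_sub_one hq0 hq, ramanujanTheta_neg_sq_div_sub_five h2 hq0 hq,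
    ramanujanTheta_neg_sq_div hq0 hq, ramanujanTheta_neg_neg_sq hq0 hq,
    ramanujanTheta_neg_neg_sq (hpow 2) (hnorm 2), ramanujanTheta_neg_neg_sq (hpow 5) (hnorm 5),
    ramanujanTheta_neg_neg_sq (hpow 10) (hnorm 10)]
  field_simp

lemma phi_eq_ramanujanTheta (q : ℝ) : phi q = ramanujanTheta q q := by
  simp only [phi, ramanujanTheta, thetaTerm_self]

lemma fneg_eq_ramanujanTheta (q : ℝ) : fneg q = ramanujanTheta (-q) (-q ^ 2) := by
  refine tsum_congr fun n ↦ ?_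
  have hsign : (-1 : ℝ) ^ n ^ 2 = (-1) ^ n := by
    rcases Int.even_or_odd n with h | h
    · rw [h.neg_one_zpow, (h.pow_of_ne_zero two_ne_zero).neg_one_zpow]
    · rw [h.neg_one_zpow, h.pow.neg_one_zpow]
  rw [← hsign, ← thetaTerm_self, ← thetaTerm_self_sq, thetaTerm_mul_thetaTerm, neg_one_mul,
    neg_one_mul]

theorem stmt_3 (q U : ℝ) (hq0 : 0 < q) (hq1 : q < 1)
    (hU : U = phi (-q) ^ 2 / phi (-(q ^ 5)) ^ 2) :
    q * fneg q ^ 6 * fneg (q ^ 10) ^ 6 / (fneg (q ^ 2) ^ 6 * fneg (q ^ 5) ^ 6)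
      = U * (U - 1) / (U - 5) := by
  simp only [phi_eq_ramanujanTheta, fneg_eq_ramanujanTheta] at hU ⊢
  exact stmt_3_general two_ne_zero q U (by rwa [norm_of_nonneg hq0.le]) hU
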